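/- The number of tuples (a,b,c,d,e,f) ∈ F^6 with a = 0 and f = 0 such that X = X(a,b,c,d,e,f) satisfies rank X = 4 and rank X² = 1 equals 2q²·(q−1), and the number of such tuples with rank X = 2 (and then automatically X² = 0) equals (q−1)·(q+1). -/

import Mathlib

/-!
With `a = f = 0` the matrix is strictly upper triangular and sparse enough for every rank to be
read off by hand, using a nonvanishing minor for lower bounds and an explicit factorization for
upper bounds.

* `b ≠ 0`: `X` has rank 4, and the nonzero part of `X²` is a 2×2 block with determinant
  `b² (3 c² - 4 b d)`, so `rank X² = 1` exactly when `d = 3 c² / (4 b)`.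
  This leaves `b ≠ 0` and `c, e` free: `q² (q - 1)` tuples.
* `b = 0`, `c ≠ 0`: `X` has rank 4 and `X²` has the single nonzero entry `2 c²`.
  This leaves `c ≠ 0` and `d, e` free: again `q² (q - 1)` tuples.
* `b = c = 0`: `X` has rank 2 if `(d, e) ≠ 0` and rank 0 otherwise, giving `q² - 1` tuples of
  rank 2.
-/

/-- The image of the general nilpotent element
`a·e_{α₁} + b·e_{α₁+α₂} + c·e_{2α₁+α₂} + d·e_{3α₁+α₂} + e·e_{3α₁+2α₂} + f·e_{α₂}`
of the Lie algebra `g₂` over `F` in its faithful 7-dimensional representation. -/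
noncomputable def g2X {F : Type*} [Field F] (a b c d e f : F) :
    Matrix (Fin 7) (Fin 7) F :=
  !![0, a, b, 2*c, d, e, 0;
     0, 0, f, -2*b, -c, 0, e;
     0, 0, 0, 2*a, 0, -c, -d;
     0, 0, 0, 0, a, b, c;
     0, 0, 0, 0, 0, f, -b;
     0, 0, 0, 0, 0, 0, a;
     0, 0, 0, 0, 0, 0, 0]

theorem le_rank_of_minor {F : Type*} [Field F] {n k : ℕ} (M : Matrix (Fin n) (Fin n) F)
    (r c : Fin k → Fin n) (h : (M.submatrix r c).det ≠ 0) : k ≤ M.rank := by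
  have h1 : (M.submatrix r c).rank = k := by
    rw [Matrix.rank_of_isUnit _ ((Matrix.isUnit_iff_isUnit_det _).2 (isUnit_iff_ne_zero.2 h)),
      Fintype.card_fin]
  -- Selecting rows and columns amounts to multiplying by submatrices of the identity.
  have h2 : M.submatrix r c =
      (1 : Matrix (Fin n) (Fin n) F).submatrix r id * M *
        (1 : Matrix (Fin n) (Fin n) F).submatrix id c := by
    ext i j
    simp [Matrix.mul_apply, Matrix.one_apply]
  rw [← h1, h2]
  exact (Matrix.rank_mul_le_left _ _).trans (Matrix.rank_mul_le_right _ _)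

theorem rank_le_of_factor {F : Type*} [Field F] {n k : ℕ} {M : Matrix (Fin n) (Fin n) F}
    (A : Matrix (Fin n) (Fin k) F) (B : Matrix (Fin k) (Fin n) F) (h : M = A * B) :
    M.rank ≤ k := by
  rw [h]
  exact (Matrix.rank_mul_le_left _ _).trans (by simpa using Matrix.rank_le_width A)

theorem g2X_sq {F : Type*} [Field F] (b c d e : F) :
    (g2X 0 b c d e 0) ^ 2 =
    !![0, 0, 0, 0, 0, b*c, 2*c^2-2*b*d;
       0, 0, 0, 0, 0, -2*b^2, -(b*c);
       0, 0, 0, 0, 0, 0, 0;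
       0, 0, 0, 0, 0, 0, 0;
       0, 0, 0, 0, 0, 0, 0;
       0, 0, 0, 0, 0, 0, 0;
       0, 0, 0, 0, 0, 0, 0] := by
  rw [pow_two]
  ext i j
  fin_cases i <;> fin_cases j <;> simp [g2X, Matrix.mul_apply, Fin.sum_univ_succ] <;> ring

theorem rank_of_b_ne {F : Type*} [Field F] (h2 : (2 : F) ≠ 0) (b c d e : F) (hb : b ≠ 0) :
    (g2X 0 b c d e 0).rank = 4 := by
  apply le_antisymm
  -- The third row is a combination of the fourth and fifth.
  · refine rank_le_of_factor
      !![1,0,0,0; 0,1,0,0; 0,0,-c/b,(d-c^2/b)/b; 0,0,1,0; 0,0,0,1; 0,0,0,0; 0,0,0,0]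
      !![0,0,b,2*c,d,e,0; 0,0,0,-2*b,-c,0,e; 0,0,0,0,0,b,c; 0,0,0,0,0,0,-b] ?_
    ext i j
    fin_cases i <;> fin_cases j <;> simp [g2X, Matrix.mul_apply, Fin.sum_univ_succ] <;>
      field_simp <;> ring
  · refine le_rank_of_minor _ ![0,1,3,4] ![2,3,5,6] ?_
    have : ((g2X 0 b c d e 0).submatrix ![0,1,3,4] ![2,3,5,6]).det = 2 * b^4 := by
      rw [Matrix.det_of_upperTriangular]
      · simp [g2X, Fin.prod_univ_succ]
        ring
      · intro i j h
        fin_cases i <;> fin_cases j <;> first | exact absurd h (by decide) | simp [g2X]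
    rw [this]
    positivity

theorem rank_of_c_ne {F : Type*} [Field F] (h2 : (2 : F) ≠ 0) (c d e : F) (hc : c ≠ 0) :
    (g2X 0 0 c d e 0).rank = 4 := by
  apply le_antisymm
  · refine rank_le_of_factor
      !![1,0,0,0; 0,1,0,0; 0,0,1,0; 0,0,0,1; 0,0,0,0; 0,0,0,0; 0,0,0,0]
      !![0,0,0,2*c,d,e,0; 0,0,0,0,-c,0,e; 0,0,0,0,0,-c,-d; 0,0,0,0,0,0,c] ?_
    ext i j
    fin_cases i <;> fin_cases j <;> simp [g2X, Matrix.mul_apply, Fin.sum_univ_succ]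
  · refine le_rank_of_minor _ ![0,1,2,3] ![3,4,5,6] ?_
    have : ((g2X 0 0 c d e 0).submatrix ![0,1,2,3] ![3,4,5,6]).det = 2 * c^4 := by
      rw [Matrix.det_of_upperTriangular]
      · simp [g2X, Fin.prod_univ_succ]
        ring
      · intro i j h
        fin_cases i <;> fin_cases j <;> first | exact absurd h (by decide) | simp [g2X]
    rw [this]
    positivity

theorem rank_le_two {F : Type*} [Field F] (d e : F) : (g2X 0 0 0 d e 0).rank ≤ 2 := by
  refine rank_le_of_factor
    !![1,0; 0,e; 0,-d; 0,0; 0,0; 0,0; 0,0] !![0,0,0,0,d,e,0; 0,0,0,0,0,0,1] ?_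
  ext i j
  fin_cases i <;> fin_cases j <;> simp [g2X, Matrix.mul_apply, Fin.sum_univ_succ]

theorem rank_eq_two_iff {F : Type*} [Field F] (d e : F) :
    (g2X 0 0 0 d e 0).rank = 2 ↔ (d, e) ≠ 0 := by
  constructor
  · intro h h0
    obtain ⟨rfl, rfl⟩ := Prod.mk.inj h0
    have : g2X (0 : F) 0 0 0 0 0 = 0 := by
      ext i j
      fin_cases i <;> fin_cases j <;> simp [g2X]
    rw [this, Matrix.rank_zero] at h
    omega
  · intro h
    refine le_antisymm (rank_le_two d e) ?_
    by_cases hd : d = 0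
    · have he : e ≠ 0 := by
        rintro rfl
        exact h (by simp [hd])
      refine le_rank_of_minor _ ![0,1] ![5,6] ?_
      rw [Matrix.det_fin_two]
      simp [g2X, he]
    · refine le_rank_of_minor _ ![0,2] ![4,6] ?_
      rw [Matrix.det_fin_two]
      simp [g2X, hd]

theorem rank_sq_iff_of_b_ne {F : Type*} [Field F] (h2 : (2 : F) ≠ 0) (b c d e : F)
    (hb : b ≠ 0) : ((g2X 0 b c d e 0) ^ 2).rank = 1 ↔ d = 3 * c^2 / (4 * b) := by
  have h4 : (4 : F) ≠ 0 := by
    rw [show (4 : F) = 2 * 2 by norm_num]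
    exact mul_ne_zero h2 h2
  rw [g2X_sq]
  constructor
  · intro h
    by_contra hd
    have hne : 3 * c^2 - 4 * b * d ≠ 0 := by
      intro h0
      apply hd
      rw [eq_div_iff (mul_ne_zero h4 hb)]
      linear_combination -h0
    have hle := (le_rank_of_minor _ ![0,1] ![5,6] ?_).trans h.le
    · omega
    · have hdet : -(b*c*(b*c)) + (2*c^2-2*b*d)*(2*b^2) = b^2 * (3 * c^2 - 4 * b * d) := by ring
      rw [Matrix.det_fin_two]
      simp [hdet, hb, hne]
  · rintro rfl
    apply le_antisymm
    -- The first row is `-c / (2 b)` times the second.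
    · refine rank_le_of_factor !![-c/(2*b); 1; 0; 0; 0; 0; 0]
        !![0,0,0,0,0,-2*b^2,-(b*c)] ?_
      ext i j
      fin_cases i <;> fin_cases j <;> simp [Matrix.mul_apply] <;> field_simp <;> ring
    · refine le_rank_of_minor _ ![1] ![5] ?_
      rw [Matrix.det_fin_one]
      simp [h2, hb]

theorem rank_sq_of_c_ne {F : Type*} [Field F] (h2 : (2 : F) ≠ 0) (c d e : F) (hc : c ≠ 0) :
    ((g2X 0 0 c d e 0) ^ 2).rank = 1 := by
  rw [g2X_sq]
  apply le_antisymm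
  · refine rank_le_of_factor !![2*c^2; 0; 0; 0; 0; 0; 0] !![0,0,0,0,0,0,1] ?_
    ext i j
    fin_cases i <;> fin_cases j <;> simp [Matrix.mul_apply]
  · refine le_rank_of_minor _ ![0] ![6] ?_
    rw [Matrix.det_fin_one]
    simp [h2, hc]

/-- Parametrization of the tuples with `rank X = 4` and `rank X² = 1`: the summands are the
cases `b ≠ 0` and `b = 0`, with the unit standing for `b`, respectively `c`. -/
noncomputable def param4 (F : Type*) [Field F] :
    (Fˣ × F × F) ⊕ (Fˣ × F × F) → F × F × F × F × F × F
  | .inl (b, c, e) => (0, b, c, 3 * c^2 / (4 * b), e, 0)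
  | .inr (c, d, e) => (0, 0, c, d, e, 0)

theorem param4_injective (F : Type*) [Field F] : Function.Injective (param4 F) := by
  rintro (⟨u, x, y⟩ | ⟨u, x, y⟩) (⟨u', x', y'⟩ | ⟨u', x', y'⟩) h <;>
    simp only [param4, Prod.mk.injEq] at h
  · obtain ⟨-, h1, h2, -, h3, -⟩ := h
    simp [Units.ext h1, h2, h3]
  · exact absurd h.2.1 u.ne_zero
  · exact absurd h.2.1.symm u'.ne_zero
  · obtain ⟨-, -, h1, h2, h3, -⟩ := h
    simp [Units.ext h1, h2, h3]

/-- Among tuples `(a,b,c,d,e,f) ∈ F^6` with `a = 0` and `f = 0`, the number with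
`rank X = 4` and `rank X² = 1` equals `2q²·(q−1)`, and the number with
`rank X = 2` (automatically `X² = 0`) equals `(q−1)·(q+1)`. -/
theorem count_case4 (F : Type*) [Field F] [Fintype F]
    (q : ℕ) (hq : Fintype.card F = q) (hchar : 3 < ringChar F) :
    {v : F × F × F × F × F × F | v.1 = 0 ∧ v.2.2.2.2.2 = 0 ∧
        (g2X v.1 v.2.1 v.2.2.1 v.2.2.2.1 v.2.2.2.2.1 v.2.2.2.2.2).rank = 4 ∧
        ((g2X v.1 v.2.1 v.2.2.1 v.2.2.2.1 v.2.2.2.2.1 v.2.2.2.2.2) ^ 2).rank = 1}.ncard =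
      2 * q ^ 2 * (q - 1) ∧
    {v : F × F × F × F × F × F | v.1 = 0 ∧ v.2.2.2.2.2 = 0 ∧
        (g2X v.1 v.2.1 v.2.2.1 v.2.2.2.1 v.2.2.2.2.1 v.2.2.2.2.2).rank = 2}.ncard =
      (q - 1) * (q + 1) := by
  have h2 : (2 : F) ≠ 0 := Ring.two_ne_zero (by omega)
  subst hq
  classical
  constructor
  · have hset : {v : F × F × F × F × F × F | v.1 = 0 ∧ v.2.2.2.2.2 = 0 ∧
        (g2X v.1 v.2.1 v.2.2.1 v.2.2.2.1 v.2.2.2.2.1 v.2.2.2.2.2).rank = 4 ∧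
        ((g2X v.1 v.2.1 v.2.2.1 v.2.2.2.1 v.2.2.2.2.1 v.2.2.2.2.2) ^ 2).rank = 1} =
        Set.range (param4 F) := by
      ext ⟨a, b, c, d, e, f⟩
      constructor
      · rintro ⟨rfl, rfl, h4, h1⟩
        dsimp only at h4 h1
        by_cases hb : b = 0
        · subst hb
          by_cases hc : c = 0
          · subst hc
            have := rank_le_two d e
            omega
          · exact ⟨.inr (Units.mk0 c hc, d, e), rfl⟩
        · refine ⟨.inl (Units.mk0 b hb, c, e), ?_⟩
          rw [(rank_sq_iff_of_b_ne h2 b c d e hb).1 h1]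
          rfl
      · rintro ⟨⟨u, x, y⟩ | ⟨u, x, y⟩, h⟩
        · rw [← h]
          exact ⟨rfl, rfl, rank_of_b_ne h2 _ _ _ _ u.ne_zero,
            (rank_sq_iff_of_b_ne h2 _ _ _ _ u.ne_zero).2 rfl⟩
        · rw [← h]
          exact ⟨rfl, rfl, rank_of_c_ne h2 _ _ _ u.ne_zero,
            rank_sq_of_c_ne h2 _ _ _ u.ne_zero⟩
    rw [hset, ← Nat.card_coe_set_eq, Nat.card_range_of_injective (param4_injective F)]
    simp only [Nat.card_eq_fintype_card, Fintype.card_sum, Fintype.card_prod, Fintype.card_units]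
    ring
  · have hset : {v : F × F × F × F × F × F | v.1 = 0 ∧ v.2.2.2.2.2 = 0 ∧
        (g2X v.1 v.2.1 v.2.2.1 v.2.2.2.1 v.2.2.2.2.1 v.2.2.2.2.2).rank = 2} =
        (fun p : F × F => ((0, 0, 0, p.1, p.2, 0) : F × F × F × F × F × F)) '' {0}ᶜ := by
      ext ⟨a, b, c, d, e, f⟩
      constructor
      · rintro ⟨rfl, rfl, h⟩
        dsimp only at h
        by_cases hb : b = 0
        · subst hb
          by_cases hc : c = 0
          · subst hc
            exact ⟨(d, e), (rank_eq_two_iff d e).1 h, rfl⟩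
          · have := rank_of_c_ne h2 c d e hc
            omega
        · have := rank_of_b_ne h2 b c d e hb
          omega
      · rintro ⟨⟨d', e'⟩, hp, h⟩
        rw [← h]
        exact ⟨rfl, rfl, (rank_eq_two_iff d' e').2 hp⟩
    rw [hset, Set.ncard_image_of_injective]
    · rw [Set.ncard_compl, Set.ncard_singleton, Nat.card_eq_fintype_card, Fintype.card_prod,
        mul_comm (_ - 1), ← Nat.mul_self_sub_mul_self_eq, mul_one]
    · rintro ⟨x, y⟩ ⟨x', y'⟩ h
      simpa using h
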